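/- Let S and T be splayed sequences of Reeb domains with the same length k and the same type data (t_1,...,t_{k+1}). Then S and T are composable-equivalent, i.e. their total classes satisfy [S] = [T] in the group G, if and only if the associated sequences of Reeb chords rho(S) and rho(T) are 123-equivalent (have equal 123-reductions). -/

import Mathlib

/-! ## The torus algebra -/

/-- The two idempotents of the torus algebra. -/
inductive Idem : Type
  | m | l
deriving DecidableEq

/-- Reeb chords of the torus algebra. -/
inductive Chord : Type
  | r1 | r2 | r3 | r12 | r23 | r123
deriving DecidableEq

open Chord

/-- The idempotent `ι` with `ι * ρ = ρ`. -/
def iotaStart : Chord → Idem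
  | r1 => Idem.m | r2 => Idem.l | r3 => Idem.m
  | r12 => Idem.m | r23 => Idem.l | r123 => Idem.m

/-- The idempotent `ι` with `ρ * ι = ρ`. -/
def iotaEnd : Chord → Idem
  | r1 => Idem.l | r2 => Idem.m | r3 => Idem.l
  | r12 => Idem.m | r23 => Idem.l | r123 => Idem.l

/-- A chord is jumping if its starting and ending idempotents differ. -/
def Jumping (c : Chord) : Prop := iotaStart c ≠ iotaEnd c

/-- The partial product of Reeb chords (`none` encodes product zero). -/
def mul? : Chord → Chord → Option Chord
  | r1, r2 => some r12
  | r2, r3 => some r23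
  | r1, r23 => some r123
  | r12, r3 => some r123
  | _, _ => none

/-- A 123-reduction step: replace an adjacent 123-composable pair by `ρ₁₂₃`. -/
inductive Step123 : List Chord → List Chord → Prop
  | mk (pre post : List Chord) (a b : Chord) (hab : mul? a b = some r123) :
      Step123 (pre ++ a :: b :: post) (pre ++ r123 :: post)

/-- A sequence is 123-reduced if no 123-reduction step applies. -/
def Reduced123 (s : List Chord) : Prop := ∀ t, ¬ Step123 s t

/-- The lower endpoint (0-based quadrant index) of the interval of a chord. -/
def loIdx : Chord → Fin 3
  | r1 => 0 | r2 => 1 | r3 => 2 | r12 => 0 | r23 => 1 | r123 => 0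

/-- The upper endpoint (0-based quadrant index) of the interval of a chord. -/
def hiIdx : Chord → Fin 3
  | r1 => 0 | r2 => 1 | r3 => 2 | r12 => 1 | r23 => 2 | r123 => 2

/-- The non-jumping chord `π_ι` associated to an idempotent: `π_{ι_m} = ρ₁₂`,
`π_{ι_l} = ρ₂₃`. -/
def piIdem : Idem → Chord
  | Idem.m => r12
  | Idem.l => r23

/-! ## Splayed sequences of Reeb domains -/

/-- A splayed sequence of Reeb domains of length `k`: jumping chords `r 0, …, r (k-1)` with
matching idempotents, and nonnegative multiplicities `n 0, …, n k`. -/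
structure SplayedSeq (k : ℕ) where
  n : Fin (k + 1) → ℕ
  r : Fin k → Chord
  jump : ∀ i, Jumping (r i)
  coh : ∀ (i : ℕ) (h1 : i < k) (h2 : i + 1 < k), iotaEnd (r ⟨i, h1⟩) = iotaStart (r ⟨i + 1, h2⟩)

/-- The type data of a splayed sequence: `t i = iotaStart (r i)` for `i < k` and
`t k = iotaEnd (r (k-1))`. -/
def typeData {k : ℕ} (S : SplayedSeq k) (i : Fin (k + 1)) : Idem :=
  if h : (i : ℕ) < k then iotaStart (S.r ⟨i, h⟩)
  else if hk : 0 < k then iotaEnd (S.r ⟨k - 1, by omega⟩)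
  else Idem.m

/-- The sequence of Reeb chords associated to a splayed sequence of Reeb domains: for
`i = 0,…,k` in order, `n i` copies of `π_{t i}` followed (when `i < k`) by `r i`. -/
def rhoList {k : ℕ} (S : SplayedSeq k) : List Chord :=
  ((List.finRange (k + 1)).map (fun a =>
    List.replicate (S.n a) (piIdem (typeData S a)) ++
      if h : (a : ℕ) < k then [S.r ⟨a, h⟩] else [])).flatten

/-- The free abelian group on the quadrant generators `Q^i_t`, `0 ≤ i < k`, `t ∈ {1,2,3}`. -/
abbrev FreeG (k : ℕ) := (Fin k × Fin 3) →₀ ℤ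

/-- The relation vector identifying the half-disk classes of consecutive rows `a`, `a+1`,
depending on the type of the curve `δ^{a+1}` between them. -/
noncomputable def relVec (k : ℕ) (t : Fin (k + 1) → Idem) (a : ℕ) (h : a + 1 < k) : FreeG k :=
  if t ⟨a + 1, by omega⟩ = Idem.m then
    (Finsupp.single (⟨a, by omega⟩, (0 : Fin 3)) 1 + Finsupp.single (⟨a, by omega⟩, (1 : Fin 3)) 1)
      - (Finsupp.single (⟨a + 1, h⟩, (0 : Fin 3)) 1 + Finsupp.single (⟨a + 1, h⟩, (1 : Fin 3)) 1)
  else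
    (Finsupp.single (⟨a, by omega⟩, (1 : Fin 3)) 1 + Finsupp.single (⟨a, by omega⟩, (2 : Fin 3)) 1)
      - (Finsupp.single (⟨a + 1, h⟩, (1 : Fin 3)) 1 + Finsupp.single (⟨a + 1, h⟩, (2 : Fin 3)) 1)

/-- The set of defining relations of the group `G`. -/
def relSet (k : ℕ) (t : Fin (k + 1) → Idem) : Set (FreeG k) :=
  { x | ∃ (a : ℕ) (h : a + 1 < k), x = relVec k t a h }

/-- The group `G`: the abelian group generated by the quadrant classes `Q^i_t` subject to
the half-disk relations determined by the type data `t`. -/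
abbrev G (k : ℕ) (t : Fin (k + 1) → Idem) :=
  FreeG k ⧸ Submodule.span ℤ (relSet k t)

/-- The quadrant generator `Q^i_t` in `G`. -/
noncomputable def Qgen (k : ℕ) (t : Fin (k + 1) → Idem) (i : Fin k) (q : Fin 3) : G k t :=
  Submodule.Quotient.mk (Finsupp.single (i, q) 1)

/-- The class `B^i(ρ)` of a chord `ρ = ρ_{[s,e]}`: the sum of the quadrants `Q^i_s,…,Q^i_e`. -/
noncomputable def Bclass (k : ℕ) (t : Fin (k + 1) → Idem) (i : Fin k) (c : Chord) : G k t :=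
  ∑ q : Fin 3, if loIdx c ≤ q ∧ q ≤ hiIdx c then Qgen k t i q else 0

/-- The half-disk class `H^i` of the curve `δ^{i+1}` (0-based curve index `a ∈ {0,…,k}`,
using row `min a (k-1)`). -/
noncomputable def Hclass (k : ℕ) (t : Fin (k + 1) → Idem) (a : Fin (k + 1)) : G k t :=
  if hk : 0 < k then
    let b : Fin k := ⟨min (a : ℕ) (k - 1), by omega⟩
    if t a = Idem.m then Qgen k t b 0 + Qgen k t b 1 else Qgen k t b 1 + Qgen k t b 2
  else 0

/-- The total class `[S] = ∑ n_i • H^i + ∑ B^i(r_i)` of a splayed sequence of Reeb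
domains. -/
noncomputable def totalClass (k : ℕ) (t : Fin (k + 1) → Idem) (S : SplayedSeq k) : G k t :=
  (∑ a : Fin (k + 1), (S.n a) • Hclass k t a) + ∑ i : Fin k, Bclass k t i (S.r i)


/-! ## Paths and additive invariants of chord lists -/

/-- `1` for jumping chords and `0` otherwise. -/
def nxt : Chord → ℕ
  | r12 => 0 | r23 => 0 | _ => 1

/-- `u` is a coherent list of chords starting at curve `i` and ending at curve `k`. -/
def PathAt (t : ℕ → Idem) (k : ℕ) : ℕ → List Chord → Prop
  | i, [] => i = k
  | i, c :: u => iotaStart c = t i ∧ PathAt t k (i + nxt c) u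

/-- Additive invariant of a chord list, given the value of each chord at each position. -/
def foldV {M : Type*} [AddCommGroup M] (V : ℕ → Chord → M) : ℕ → List Chord → M
  | _, [] => 0
  | i, c :: u => V i c + foldV V (i + nxt c) u

theorem PathAt.le {t : ℕ → Idem} {k : ℕ} {u : List Chord} :
    ∀ {i : ℕ}, PathAt t k i u → i ≤ k := by
  induction u with
  | nil => intro i h; exact le_of_eq h
  | cons c u ih => intro i h; have := ih h.2; omega

theorem step_inv {M : Type*} [AddCommGroup M] {t : ℕ → Idem} {k : ℕ} (V : ℕ → Chord → M)
    (h1 : ∀ i, i < k → t i = Idem.m → V i r1 + V (i + 1) r23 = V i r123)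
    (h2 : ∀ i, i < k → t i = Idem.m → V i r12 + V i r3 = V i r123)
    {u v : List Chord} (h : Step123 u v) :
    ∀ i, PathAt t k i u → PathAt t k i v ∧ foldV V i u = foldV V i v := by
  obtain ⟨pre, post, a, b, hab⟩ := h
  induction pre with
  | nil =>
    intro i hp
    have hle : i + nxt a + nxt b ≤ k := hp.2.2.le
    cases a <;> cases b <;> simp [mul?] at hab
    · simp only [List.nil_append, PathAt, foldV, nxt, iotaStart, add_zero] at *
      refine ⟨⟨hp.1, hp.2.2⟩, ?_⟩
      rw [← h1 i (by omega) hp.1.symm, add_assoc]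
    · simp only [List.nil_append, PathAt, foldV, nxt, iotaStart, add_zero] at *
      refine ⟨⟨hp.1, hp.2.2⟩, ?_⟩
      rw [← h2 i (by omega) hp.1.symm, add_assoc]
  | cons c pre ih =>
    intro i hp
    obtain ⟨p, q⟩ := ih _ hp.2
    exact ⟨⟨hp.1, p⟩, by simp only [List.cons_append, foldV, q]⟩

theorem steps_inv {M : Type*} [AddCommGroup M] {t : ℕ → Idem} {k : ℕ} (V : ℕ → Chord → M)
    (h1 : ∀ i, i < k → t i = Idem.m → V i r1 + V (i + 1) r23 = V i r123)
    (h2 : ∀ i, i < k → t i = Idem.m → V i r12 + V i r3 = V i r123)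
    {u v : List Chord} (h : Relation.ReflTransGen Step123 u v) (i : ℕ) (hu : PathAt t k i u) :
    PathAt t k i v ∧ foldV V i u = foldV V i v := by
  induction h with
  | refl => exact ⟨hu, rfl⟩
  | tail _ hs ih =>
    obtain ⟨a, b⟩ := step_inv V h1 h2 hs i ih.1
    exact ⟨a, ih.2.trans b⟩

theorem exists_reduced (u : List Chord) :
    ∃ v, Reduced123 v ∧ Relation.ReflTransGen Step123 u v := by
  induction hn : u.length using Nat.strong_induction_on generalizing u with
  | _ n ih =>
    by_cases h : Reduced123 u
    · exact ⟨u, h, .refl⟩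
    · simp only [Reduced123, not_forall, not_not] at h
      obtain ⟨w, hw⟩ := h
      have hl : w.length < n := by
        subst hn
        obtain ⟨pre, post, a, b, hab⟩ := hw
        simp
      obtain ⟨v, hv, hr⟩ := ih _ hl w rfl
      exact ⟨v, hv, .head hw hr⟩

theorem Reduced123.tail {c : Chord} {u : List Chord} (h : Reduced123 (c :: u)) :
    Reduced123 u := by
  intro v hv
  obtain ⟨pre, post, a, b, hab⟩ := hv
  exact h _ (Step123.mk (c :: pre) post a b hab)

theorem Reduced123.head {a b : Chord} {u : List Chord} (h : Reduced123 (a :: b :: u)) :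
    mul? a b ≠ some r123 := fun hab => h _ (Step123.mk [] u a b hab)

/-- Indicator function. -/
def dl (i : ℕ) : ℕ → ℤ := fun j => if j = i then 1 else 0

/-- The half-disk coefficients of a chord at position `i`. -/
def cntV (i : ℕ) : Chord → (ℕ → ℤ)
  | r1 => dl i | r2 => 0 | r3 => dl (i + 1)
  | r12 => dl i | r23 => dl i | r123 => dl i + dl (i + 1)

theorem cntV_nonneg (i : ℕ) (c : Chord) (j : ℕ) : 0 ≤ cntV i c j := by
  cases c <;> simp [cntV, dl] <;> split_ifs <;> simp

theorem cnt_nonneg (u : List Chord) (j : ℕ) : ∀ i, 0 ≤ foldV cntV i u j := by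
  induction u with
  | nil => intro i; simp [foldV]
  | cons c u ih =>
    intro i
    have := ih (i + nxt c)
    have := cntV_nonneg i c j
    simp only [foldV, Pi.add_apply]; omega

theorem cnt_lt (u : List Chord) (j : ℕ) : ∀ i, j < i → foldV cntV i u j = 0 := by
  induction u with
  | nil => intro i _; simp [foldV]
  | cons c u ih =>
    intro i h
    have h1 := ih (i + nxt c) (by omega)
    have h2 : cntV i c j = 0 := by
      cases c <;> simp [cntV, dl] <;> omega
    simp only [foldV, Pi.add_apply, h1, h2, add_zero]

/-- After `r12`, a reduced list either ends or has positive count. -/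
theorem after12 {t : ℕ → Idem} {k i : ℕ} {u : List Chord} (hi : i < k) (hm : t i = Idem.m)
    (hp : PathAt t k i u) (hr : Reduced123 (r12 :: u)) : 1 ≤ foldV cntV i u i := by
  cases u with
  | nil => simp only [PathAt] at hp; omega
  | cons c u =>
    have h0 := cnt_nonneg u i (i + nxt c)
    have h3 := hr.head
    have hs := hp.1
    simp only [foldV, Pi.add_apply]
    cases c <;> simp_all [iotaStart, cntV, dl, mul?]

/-- After `r1`, a reduced list has zero count. -/
theorem after1 {t : ℕ → Idem} {k i : ℕ} {u : List Chord} (hl : t i = Idem.l)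
    (hp : PathAt t k i u) (hr : Reduced123 (r1 :: u)) : foldV cntV i u i = 0 := by
  cases u with
  | nil => simp [foldV]
  | cons c u =>
    have h3 := hr.head
    have hs := hp.1
    cases c <;> simp_all [iotaStart, mul?]
    simp only [foldV, Pi.add_apply, cntV, nxt]
    simp [cnt_lt]

theorem alt_l {t : ℕ → Idem} {k i : ℕ} (alt : ∀ i, i < k → t i ≠ t (i + 1)) (hi : i < k)
    (hm : t i = Idem.m) : t (i + 1) = Idem.l := by
  have := alt i hi
  cases h : t (i + 1) <;> simp_all

/-- A reduced list beginning with `c` is not one beginning with another chord `d`. -/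
theorem head_eq {t : ℕ → Idem} {k i : ℕ} (alt : ∀ i, i < k → t i ≠ t (i + 1))
    {c d : Chord} {u v : List Chord}
    (hu : PathAt t k i (c :: u)) (hv : PathAt t k i (d :: v))
    (ru : Reduced123 (c :: u)) (rv : Reduced123 (d :: v))
    (h : foldV cntV i (c :: u) = foldV cntV i (d :: v)) : c = d := by
  have e0 := congrFun h i
  have e1 := congrFun h (i + 1)
  have lu := hu.2.le
  have lv := hv.2.le
  have su := hu.1
  have sv := hv.1
  have pu := hu.2
  have pv := hv.2
  have zu := cnt_lt u i (i + 1) (by omega)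
  have zv := cnt_lt v i (i + 1) (by omega)
  have nu := cnt_nonneg u i i
  have nv := cnt_nonneg v i i
  have nu1 := cnt_nonneg u (i + 1) (i + 1)
  have nv1 := cnt_nonneg v (i + 1) (i + 1)
  simp only [foldV, Pi.add_apply] at e0 e1
  clear h hu hv
  have sud : iotaStart c = iotaStart d := su.trans sv.symm
  cases c <;> cases d <;> first | rfl | (simp only [iotaStart, reduceCtorEq] at sud)
  all_goals
    simp only [iotaStart] at su sv
    simp [cntV, dl, nxt, zu, zv] at e0 e1 pu pv lu lv
  all_goals first
    | omega
    | (have := after12 (by omega) su.symm pu ru; omega)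
    | (have := after12 (by omega) su.symm pv rv; omega)
    | (have := after1 (alt_l alt (by omega) su.symm) pu ru; omega)
    | (have := after1 (alt_l alt (by omega) su.symm) pv rv; omega)

theorem cnt_pos_of_end {t : ℕ → Idem} {k : ℕ} {c : Chord} {u : List Chord}
    (hu : PathAt t k k (c :: u)) : foldV cntV k (c :: u) k ≠ 0 := by
  have lu := hu.2.le
  have nu := cnt_nonneg u k k
  simp only [foldV, Pi.add_apply]
  cases c <;> simp [cntV, dl, nxt] at * <;> omega

theorem reduced_unique {t : ℕ → Idem} {k : ℕ} (alt : ∀ i, i < k → t i ≠ t (i + 1))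
    (u : List Chord) : ∀ (v : List Chord) (i : ℕ), PathAt t k i u → PathAt t k i v →
    Reduced123 u → Reduced123 v → foldV cntV i u = foldV cntV i v → u = v := by
  induction u with
  | nil =>
    intro v i hu hv _ _ h
    cases v with
    | nil => rfl
    | cons d v =>
      simp only [PathAt] at hu
      subst hu
      exact absurd (congrFun h i).symm (cnt_pos_of_end hv)
  | cons c u ih =>
    intro v i hu hv ru rv h
    cases v with
    | nil =>
      have hv' : i = k := hv
      subst hv'
      exact absurd (congrFun h i) (cnt_pos_of_end hu)
    | cons d v =>
      have := head_eq alt hu hv ru rv h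
      subst this
      simp only [foldV, add_right_inj] at h
      rw [ih v _ hu.2 hv.2 ru.tail rv.tail h]

/-! ## The list of a splayed sequence -/

theorem path_replicate {M : Type*} [AddCommGroup M] {t : ℕ → Idem} {k i : ℕ}
    (V : ℕ → Chord → M) (u : List Chord) (hu : PathAt t k i u) (n : ℕ) :
    PathAt t k i (List.replicate n (piIdem (t i)) ++ u) ∧
    foldV V i (List.replicate n (piIdem (t i)) ++ u)
      = n • V i (piIdem (t i)) + foldV V i u := by
  have hs : iotaStart (piIdem (t i)) = t i := by cases t i <;> rfl
  have hn : nxt (piIdem (t i)) = 0 := by cases t i <;> rfl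
  induction n with
  | zero => simp [hu]
  | succ n ih =>
    simp only [List.replicate_succ, List.cons_append, PathAt, foldV, hn, add_zero, hs, true_and]
    refine ⟨ih.1, ?_⟩
    rw [ih.2, succ_nsmul']
    abel

theorem path_list {M : Type*} [AddCommGroup M] {t : ℕ → Idem} {k : ℕ}
    (V : ℕ → Chord → M) (n : ℕ → ℕ) (r : ℕ → Chord)
    (hr : ∀ i, i < k → iotaStart (r i) = t i ∧ nxt (r i) = 1) (m : ℕ) :
    ∀ i, i + m = k →
    PathAt t k i (((List.range' i (m + 1)).map (fun a =>
        List.replicate (n a) (piIdem (t a)) ++ if a < k then [r a] else [])).flatten) ∧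
    foldV V i (((List.range' i (m + 1)).map (fun a =>
        List.replicate (n a) (piIdem (t a)) ++ if a < k then [r a] else [])).flatten)
      = ∑ j ∈ Finset.range (m + 1), n (i + j) • V (i + j) (piIdem (t (i + j)))
        + ∑ j ∈ Finset.range m, V (i + j) (r (i + j)) := by
  induction m with
  | zero =>
    intro i hi
    have := path_replicate V [] (show PathAt t k i [] from by simpa [PathAt] using hi) (n i)
    have hik : ¬ i < k := by omega
    simpa [hik, foldV] using this
  | succ m ih =>
    intro i hi
    obtain ⟨a, b⟩ := ih (i + 1) (by omega)
    have hik : i < k := by omega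
    obtain ⟨hr1, hr2⟩ := hr i hik
    rw [List.range'_succ, List.map_cons, List.flatten_cons, if_pos hik, List.append_assoc]
    have := path_replicate (t := t) (k := k) (i := i) V ([r i] ++ ((List.range' (i + 1) (m + 1)).map (fun a =>
        List.replicate (n a) (piIdem (t a)) ++ if a < k then [r a] else [])).flatten)
        (by simp only [List.cons_append, List.nil_append, PathAt, hr2]; exact ⟨hr1, a⟩) (n i)
    refine ⟨this.1, this.2.trans ?_⟩
    simp only [List.cons_append, List.nil_append, foldV, hr2]
    rw [b, Finset.sum_range_succ' (fun j => n (i + j) • V (i + j) (piIdem (t (i + j)))) (m + 1),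
      Finset.sum_range_succ' (fun j => V (i + j) (r (i + j))) m]
    simp only [add_zero, Nat.add_assoc, Nat.add_comm 1]
    abel

/-- Extension of type data to natural numbers. -/
def extT {k : ℕ} (t : Fin (k + 1) → Idem) (i : ℕ) : Idem :=
  if h : i < k + 1 then t ⟨i, h⟩ else Idem.m

/-- The class in `G` of a chord at position `i`. -/
noncomputable def clV (k : ℕ) (t : Fin (k + 1) → Idem) (i : ℕ) (c : Chord) : G k t :=
  if nxt c = 0 then (if h : i < k + 1 then Hclass k t ⟨i, h⟩ else 0)
  else (if h : i < k then Bclass k t ⟨i, h⟩ c else 0)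

theorem nxt_of_jumping {c : Chord} (h : Jumping c) : nxt c = 1 := by
  cases c <;> simp [Jumping, iotaStart, iotaEnd, nxt] at *

theorem typeData_alt {k : ℕ} (S : SplayedSeq k) (i : ℕ) (hi : i < k) :
    extT (typeData S) i ≠ extT (typeData S) (i + 1) := by
  have hj := S.jump ⟨i, hi⟩
  have e1 : extT (typeData S) i = iotaStart (S.r ⟨i, hi⟩) := by
    simp [extT, typeData, hi, show i < k + 1 by omega]
  have e2 : extT (typeData S) (i + 1) = iotaEnd (S.r ⟨i, hi⟩) := by
    by_cases h : i + 1 < k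
    · simp [extT, typeData, h, hi, S.coh i hi h]
    · obtain rfl : k = i + 1 := by omega
      simp [extT, typeData]
  rw [e1, e2]; exact hj

theorem rho_path {k : ℕ} (S : SplayedSeq k) :
    PathAt (extT (typeData S)) k 0 (rhoList S) ∧
    foldV (clV k (typeData S)) 0 (rhoList S) = totalClass k (typeData S) S := by
  have key := path_list (t := extT (typeData S)) (k := k) (clV k (typeData S))
    (fun i => if h : i < k + 1 then S.n ⟨i, h⟩ else 0)
    (fun i => if h : i < k then S.r ⟨i, h⟩ else r1)
    (by
      intro i hi
      refine ⟨?_, ?_⟩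
      · simp [hi, extT, typeData, show i < k + 1 by omega]
      · simp [hi, nxt_of_jumping (S.jump ⟨i, hi⟩)]) k 0 (by omega)
  have hl : rhoList S = ((List.range' 0 (k + 1)).map (fun a =>
        List.replicate (if h : a < k + 1 then S.n ⟨a, h⟩ else 0) (piIdem (extT (typeData S) a)) ++
          if a < k then [if h : a < k then S.r ⟨a, h⟩ else r1] else [])).flatten := by
    rw [rhoList, ← List.range_eq_range', ← List.map_coe_finRange_eq_range, List.map_map]
    congr 1
    apply List.map_congr_left
    intro a _
    have ha : (a : ℕ) ≤ k := by omega
    by_cases h : (a : ℕ) < k <;> simp [extT, h, ha]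
  rw [← hl] at key
  refine ⟨key.1, key.2.trans ?_⟩
  rw [Finset.sum_range, Finset.sum_range, totalClass]
  congr 1
  · apply Finset.sum_congr rfl
    intro a _
    have hn : ∀ x, nxt (piIdem x) = 0 := by intro x; cases x <;> rfl
    have ha : (a : ℕ) ≤ k := by omega
    simp [clV, hn, ha]
  · apply Finset.sum_congr rfl
    intro a _
    simp [clV, nxt_of_jumping (S.jump a)]

/-! ## The group `G` -/

theorem Qrel {k : ℕ} (t : Fin (k + 1) → Idem) (a : ℕ) (h : a + 1 < k) :
    (t ⟨a + 1, by omega⟩ = Idem.m →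
      Qgen k t ⟨a, by omega⟩ 0 + Qgen k t ⟨a, by omega⟩ 1
        = Qgen k t ⟨a + 1, h⟩ 0 + Qgen k t ⟨a + 1, h⟩ 1) ∧
    (t ⟨a + 1, by omega⟩ = Idem.l →
      Qgen k t ⟨a, by omega⟩ 1 + Qgen k t ⟨a, by omega⟩ 2
        = Qgen k t ⟨a + 1, h⟩ 1 + Qgen k t ⟨a + 1, h⟩ 2) := by
  have hm : relVec k t a h ∈ Submodule.span ℤ (relSet k t) :=
    Submodule.subset_span ⟨a, h, rfl⟩
  constructor
  · intro ht
    rw [relVec, if_pos ht] at hm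
    exact (Submodule.Quotient.eq _).2 hm
  · intro ht
    rw [relVec, if_neg (by simp [ht])] at hm
    exact (Submodule.Quotient.eq _).2 hm

theorem clV_rel1 {k : ℕ} (t : Fin (k + 1) → Idem)
    (alt : ∀ i, i < k → extT t i ≠ extT t (i + 1)) (i : ℕ) (hi : i < k)
    (hm : extT t i = Idem.m) :
    clV k t i r1 + clV k t (i + 1) r23 = clV k t i r123 := by
  have hl := alt_l alt hi hm
  have hl' : t ⟨i + 1, by omega⟩ = Idem.l := by simpa [extT, hi] using hl
  have h0 : 0 < k := by omega
  have hH : Hclass k t ⟨i + 1, by omega⟩ = Qgen k t ⟨i, hi⟩ 1 + Qgen k t ⟨i, hi⟩ 2 := by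
    by_cases h : i + 1 < k
    · rw [(Qrel t i h).2 hl']
      simp [Hclass, h0, hl', show min (i + 1) (k - 1) = i + 1 by omega]
    · simp [Hclass, h0, hl', show min (i + 1) (k - 1) = i by omega]
  simp [clV, nxt, hi, hH, Bclass, Fin.sum_univ_three, loIdx, hiIdx]
  abel

theorem clV_rel2 {k : ℕ} (t : Fin (k + 1) → Idem) (i : ℕ) (hi : i < k)
    (hm : extT t i = Idem.m) :
    clV k t i r12 + clV k t i r3 = clV k t i r123 := by
  have hi1 : i < k + 1 := by omega
  have hm' : t ⟨i, hi1⟩ = Idem.m := by simpa [extT, hi1] using hm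
  have h0 : 0 < k := by omega
  have hH : Hclass k t ⟨i, by omega⟩ = Qgen k t ⟨i, hi⟩ 0 + Qgen k t ⟨i, hi⟩ 1 := by
    simp [Hclass, h0, hm', show min i (k - 1) = i by omega]
  simp [clV, nxt, hi, hi1, hH, Bclass, Fin.sum_univ_three, loIdx, hiIdx]

/-- Half-disk coefficients of a quadrant. -/
def etaQ (t : ℕ → Idem) (i : ℕ) (q : Fin 3) : ℕ → ℤ :=
  if q = 0 then (if t i = Idem.m then dl i else dl (i + 1))
  else if q = 1 then 0
  else (if t i = Idem.m then dl (i + 1) else dl i)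

/-- The half-disk coefficient map on the free group. -/
noncomputable def etaF (k : ℕ) (t : ℕ → Idem) : FreeG k →ₗ[ℤ] (ℕ → ℤ) :=
  Finsupp.linearCombination ℤ (fun p : Fin k × Fin 3 => etaQ t p.1 p.2)

theorem etaF_rel {k : ℕ} (t : Fin (k + 1) → Idem)
    (alt : ∀ i, i < k → extT t i ≠ extT t (i + 1)) :
    Submodule.span ℤ (relSet k t) ≤ LinearMap.ker (etaF k (extT t)) := by
  rw [Submodule.span_le]
  rintro x ⟨a, h, rfl⟩
  have hal := alt a (by omega)
  have he : extT t (a + 1) = t ⟨a + 1, by omega⟩ := by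
    simp [extT, show a < k by omega]
  simp only [SetLike.mem_coe, LinearMap.mem_ker, relVec]
  split_ifs with ht
  · rw [← he] at ht
    have : extT t a ≠ Idem.m := by rw [← ht]; exact hal
    simp [etaF, etaQ, this, ht]
  · rw [← he] at ht
    have : extT t a = Idem.m := by
      cases h1 : extT t a <;> cases h2 : extT t (a + 1) <;> simp_all
    simp [etaF, etaQ, this, ht]

/-- The half-disk coefficient map on `G`. -/
noncomputable def eta {k : ℕ} (t : Fin (k + 1) → Idem)
    (alt : ∀ i, i < k → extT t i ≠ extT t (i + 1)) : G k t →ₗ[ℤ] (ℕ → ℤ) :=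
  Submodule.liftQ _ (etaF k (extT t)) (etaF_rel t alt)

theorem eta_Q {k : ℕ} (t : Fin (k + 1) → Idem)
    (alt : ∀ i, i < k → extT t i ≠ extT t (i + 1)) (i : Fin k) (q : Fin 3) :
    eta t alt (Qgen k t i q) = etaQ (extT t) i q := by
  have : eta t alt (Qgen k t i q) = etaF k (extT t) (Finsupp.single (i, q) 1) :=
    Submodule.liftQ_apply _ _ _
  rw [this]; simp [etaF]

theorem eta_H {k : ℕ} (t : Fin (k + 1) → Idem)
    (alt : ∀ i, i < k → extT t i ≠ extT t (i + 1)) (hk : 0 < k) (i : ℕ) (hi : i < k + 1) :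
    eta t alt (Hclass k t ⟨i, hi⟩) = dl i := by
  have he : t ⟨i, hi⟩ = extT t i := by simp [extT, hi]
  by_cases h : i < k
  · have hmin : min i (k - 1) = i := by omega
    simp only [Hclass, hk, dif_pos, he, hmin]
    split_ifs with ht <;> simp [eta_Q, etaQ, ht]
  · obtain ⟨j, rfl⟩ : ∃ j, k = j + 1 := ⟨k - 1, by omega⟩
    obtain rfl : i = j + 1 := by omega
    have hal := alt j (by omega)
    simp only [Hclass, hk, dif_pos, he, show min (j + 1) (j + 1 - 1) = j by omega]
    split_ifs with ht
    · have : extT t j ≠ Idem.m := by rw [← ht]; exact hal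
      simp [eta_Q, etaQ, this]
    · have : extT t j = Idem.m := by
        cases h1 : extT t j <;> cases h2 : extT t (j + 1) <;> simp_all
      simp [eta_Q, etaQ, this]

theorem eta_fold {k : ℕ} (t : Fin (k + 1) → Idem)
    (alt : ∀ i, i < k → extT t i ≠ extT t (i + 1)) (hk : 0 < k) (u : List Chord) :
    ∀ i, PathAt (extT t) k i u → eta t alt (foldV (clV k t) i u) = foldV cntV i u := by
  induction u with
  | nil => intro i _; simp [foldV]
  | cons c u ih =>
    intro i hp
    have hle := hp.2.le
    have hs := hp.1
    simp only [foldV, map_add]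
    rw [ih _ hp.2]
    congr 1
    have hi1 : i < k + 1 := by omega
    cases c <;> simp only [nxt, iotaStart] at hle hs
    all_goals
      simp [clV, nxt, hi1, eta_H t alt hk, cntV, Bclass, Fin.sum_univ_three, loIdx, hiIdx]
    all_goals
      have hi : i < k := by omega
      simp [hi, eta_Q, etaQ, ← hs]

/-- Two splayed sequences of Reeb domains with the same length and the same type data are
composable-equivalent (their total classes agree in `G`) if and only if their associated
sequences of Reeb chords are 123-equivalent, i.e. have equal 123-reductions (equivalently,
they can be 123-reduced to a common 123-reduced sequence). -/
theorem composableEquivalent_iff_rho_123equivalent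
    (k : ℕ) (hk : 0 < k) (t : Fin (k + 1) → Idem)
    (S T : SplayedSeq k) (hS : typeData S = t) (hT : typeData T = t) :
    totalClass k t S = totalClass k t T ↔
      ∃ u : List Chord, Reduced123 u ∧
        Relation.ReflTransGen Step123 (rhoList S) u ∧
        Relation.ReflTransGen Step123 (rhoList T) u := by

  subst hS
  have alt := typeData_alt S
  obtain ⟨pS, fS⟩ := rho_path S
  obtain ⟨pT, fT⟩ := rho_path T
  rw [hT] at pT fT
  have g1 := clV_rel1 (typeData S) alt
  have g2 := clV_rel2 (typeData S)
  have c1 : ∀ i, i < k → extT (typeData S) i = Idem.m →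
      cntV i r1 + cntV (i + 1) r23 = cntV i r123 := fun _ _ _ => rfl
  have c2 : ∀ i, i < k → extT (typeData S) i = Idem.m →
      cntV i r12 + cntV i r3 = cntV i r123 := fun _ _ _ => rfl
  constructor
  · intro h
    obtain ⟨u, ru, hu⟩ := exists_reduced (rhoList S)
    obtain ⟨v, rv, hv⟩ := exists_reduced (rhoList T)
    obtain ⟨pu, eu⟩ := steps_inv cntV c1 c2 hu 0 pS
    obtain ⟨pv, ev⟩ := steps_inv cntV c1 c2 hv 0 pT
    have huv : u = v := by
      refine reduced_unique alt u v 0 pu pv ru rv ?_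
      rw [← eu, ← ev, ← eta_fold _ alt hk _ 0 pS, ← eta_fold _ alt hk _ 0 pT, fS, fT, h]
    subst huv
    exact ⟨u, ru, hu, hv⟩
  · rintro ⟨u, -, hu, hv⟩
    rw [← fS, ← fT, (steps_inv _ g1 g2 hu 0 pS).2, (steps_inv _ g1 g2 hv 0 pT).2]
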